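/- Identity Principle for v-slice regular functions: Let Ω ⊂ ℍ be an axially symmetric slice domain, v ∈ ℍ, and f ∈ 𝒮ℛ_v(Ω). If there exists i ∈ 𝕊² such that the zero set Z_f ∩ Ω_i has an accumulation point in Ω_i, then f ≡ 0 on Ω. -/

import Mathlib

open Quaternion

noncomputable section

/-- Real Euclidean inner product on the quaternions (sum of products of components). -/
def qinner (q v : ℍ[ℝ]) : ℝ :=
  q.re * v.re + q.imI * v.imI + q.imJ * v.imJ + q.imK * v.imK

/-- The sphere of purely imaginary unit quaternions. -/
def Sph2 : Set ℍ[ℝ] := {i | i.re = 0 ∧ ‖i‖ = 1}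

/-- The complex slice plane `ℂ(i) = {x + y i : x, y ∈ ℝ}`. -/
def slicePlane (i : ℍ[ℝ]) : Set ℍ[ℝ] := {z | ∃ x y : ℝ, z = (x : ℍ[ℝ]) + y • i}

/-- The slice Cauchy–Riemann operator `∂/∂ z̄_i = (1/2)(∂/∂x + i ∂/∂y)`. -/
def dbar (i : ℍ[ℝ]) (f : ℍ[ℝ] → ℍ[ℝ]) (q : ℍ[ℝ]) : ℍ[ℝ] :=
  (1 / 2 : ℝ) • (fderiv ℝ f q 1 + i * fderiv ℝ f q i)

/-- Slice regular functions on `Ω`. -/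
def SliceRegularOn (f : ℍ[ℝ] → ℍ[ℝ]) (Ω : Set ℍ[ℝ]) : Prop :=
  ContDiffOn ℝ 1 f Ω ∧ ∀ i ∈ Sph2, ∀ q ∈ Ω ∩ slicePlane i, dbar i f q = 0

/-- `v`-slice regular functions on `Ω`. -/
def VSliceRegularOn (v : ℍ[ℝ]) (f : ℍ[ℝ] → ℍ[ℝ]) (Ω : Set ℍ[ℝ]) : Prop :=
  ContDiffOn ℝ 1 f Ω ∧ ∀ i ∈ Sph2, ∀ q ∈ Ω ∩ slicePlane i,
    dbar i f q + (1 / 4 : ℝ) • ((v - i * v * i) * f q) = 0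

/-- Axially symmetric slice domain. -/
def AxSymSliceDomain (Ω : Set ℍ[ℝ]) : Prop :=
  IsOpen Ω ∧ IsConnected Ω ∧ (∃ r : ℝ, (r : ℍ[ℝ]) ∈ Ω) ∧
  (∀ i ∈ Sph2, IsConnected (Ω ∩ slicePlane i)) ∧
  (∀ (x y : ℝ), ∀ i ∈ Sph2, (x : ℍ[ℝ]) + y • i ∈ Ω → ∀ j ∈ Sph2, (x : ℍ[ℝ]) + y • j ∈ Ω)

lemma Sph2.sq {i : ℍ[ℝ]} (hi : i ∈ Sph2) : i.imI ^ 2 + i.imJ ^ 2 + i.imK ^ 2 = 1 := by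
  have h := Quaternion.normSq_eq_norm_mul_self i
  rw [hi.2, Quaternion.normSq_def', hi.1] at h
  linarith

lemma Sph2.mul_self {i : ℍ[ℝ]} (hi : i ∈ Sph2) : i * i = -1 := by
  have h := Sph2.sq hi
  have h0 := hi.1
  ext <;> simp [h0] <;> linarith

/-- The parametrization of the slice plane. -/
def iota (i : ℍ[ℝ]) : ℂ →L[ℝ] ℍ[ℝ] :=
  Complex.reCLM.smulRight 1 + Complex.imCLM.smulRight i

lemma iota_apply (i : ℍ[ℝ]) (z : ℂ) : iota i z = (z.re : ℍ[ℝ]) + z.im • i := by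
  have : (z.re : ℍ[ℝ]) = z.re • (1 : ℍ[ℝ]) := by
    ext <;> simp
  simp [iota, this]

lemma iota_isometry {i : ℍ[ℝ]} (hi : i ∈ Sph2) : Isometry (iota i) := by
  refine AddMonoidHomClass.isometry_of_norm _ fun z => ?_
  have h := Quaternion.normSq_eq_norm_mul_self (iota i z)
  have h2 := Sph2.sq hi
  have h0 := hi.1
  have h3 : Quaternion.normSq (iota i z) = ‖z‖ * ‖z‖ := by
    rw [Quaternion.normSq_def', iota_apply, Complex.norm_mul_self_eq_normSq, Complex.normSq_apply]
    simp [h0]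
    linear_combination z.im ^ 2 * h2
  rw [h3] at h
  exact ((mul_self_inj (norm_nonneg _) (norm_nonneg _)).1 h).symm

/-- Complex-valued functionals, linear for left multiplication by `i`. -/
def Lfun (i w : ℍ[ℝ]) : ℍ[ℝ] →L[ℝ] ℂ :=
  LinearMap.toContinuousLinearMap
    { toFun := fun q => ⟨(q * w).re, -(i * q * w).re⟩
      map_add' := by
        intro a b
        apply Complex.ext
        · simp only [add_mul, mul_add, Quaternion.re_add, Complex.add_re]
        · simp only [add_mul, mul_add, Quaternion.re_add, Complex.add_im]; ring
      map_smul' := by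
        intro a b
        apply Complex.ext
        · simp only [smul_mul_assoc, mul_smul_comm, Quaternion.re_smul, RingHom.id_apply,
            Complex.smul_re]
        · simp only [smul_mul_assoc, mul_smul_comm, Quaternion.re_smul, RingHom.id_apply,
            Complex.smul_im, smul_eq_mul]; ring }

lemma Lfun_apply (i w q : ℍ[ℝ]) : Lfun i w q = ⟨(q * w).re, -(i * q * w).re⟩ := rfl

lemma Lfun_mul {i : ℍ[ℝ]} (hi : i ∈ Sph2) (w q : ℍ[ℝ]) :
    Lfun i w (i * q) = Complex.I * Lfun i w q := by
  rw [Lfun_apply, Lfun_apply, ← mul_assoc i i q, Sph2.mul_self hi]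
  apply Complex.ext
  · simp only [Complex.mul_re, Complex.I_re, Complex.I_im]; ring
  · simp only [Complex.mul_im, Complex.I_re, Complex.I_im, neg_mul, one_mul, Quaternion.re_neg]
    ring

lemma Lfun_star (i q : ℍ[ℝ]) (h : Lfun i (star q) q = 0) : q = 0 := by
  have := congrArg Complex.re h
  rw [Lfun_apply] at this
  simp only [Complex.zero_re] at this
  rw [Quaternion.self_mul_star, Quaternion.re_coe] at this
  exact Quaternion.normSq_eq_zero.1 this

/-- `qinner · v` as a continuous linear functional. -/
def qin (v : ℍ[ℝ]) : ℍ[ℝ] →L[ℝ] ℝ :=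
  LinearMap.toContinuousLinearMap
    { toFun := fun q => qinner q v
      map_add' := by intro a b; simp [qinner]; ring
      map_smul' := by intro a b; simp [qinner]; ring }

lemma qin_apply (v q : ℍ[ℝ]) : qin v q = qinner q v := rfl

lemma key_alg {i : ℍ[ℝ]} (hi : i ∈ Sph2) (v a b c : ℍ[ℝ])
    (h : (1 / 2 : ℝ) • (a + i * b) + (1 / 4 : ℝ) • ((v - i * v * i) * c) = 0) :
    qin v i • c + b = i * (qin v 1 • c + a) := by
  have hii := Sph2.mul_self hi
  have h0 := hi.1
  have e : (1 / 2 : ℝ) • (i * v + v * i) = qin v 1 • i - qin v i • (1 : ℍ[ℝ]) := by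
    ext <;> simp [qin_apply, qinner, h0] <;> ring
  have h1 : (2 : ℝ) • (i * ((1 / 2 : ℝ) • (a + i * b)
      + (1 / 4 : ℝ) • ((v - i * v * i) * c))) = 0 := by rw [h]; simp
  have h2 : (2 : ℝ) • (i * ((1 / 2 : ℝ) • (a + i * b) + (1 / 4 : ℝ) • ((v - i * v * i) * c)))
      = i * a + (i * i) * b + ((1 / 2 : ℝ) • (i * v - (i * i) * v * i)) * c := by
    simp only [mul_add, mul_smul_comm, smul_add, smul_smul, smul_mul_assoc, sub_mul, mul_sub,
      mul_assoc, smul_sub]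
    norm_num
  rw [h2, hii] at h1
  have h3 : i * v - -1 * v * i = i * v + v * i := by simp
  rw [h3, e] at h1
  simp only [sub_mul, smul_mul_assoc, one_mul, neg_mul] at h1
  rw [mul_add, mul_smul_comm]
  have h4 := sub_eq_zero.2 h1.symm
  rw [← sub_eq_zero]
  rw [← h4]
  abel

lemma slice_id {Ω : Set ℍ[ℝ]} (hΩ : AxSymSliceDomain Ω) {v : ℍ[ℝ]}
    {f : ℍ[ℝ] → ℍ[ℝ]} (hf : VSliceRegularOn v f Ω) {i : ℍ[ℝ]} (hi : i ∈ Sph2)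
    (z₀ : ℂ) (hz₀ : iota i z₀ ∈ Ω) (hz : ∃ᶠ z in nhdsWithin z₀ {z₀}ᶜ, f (iota i z) = 0)
    (z : ℂ) (hzΩ : iota i z ∈ Ω) : f (iota i z) = 0 := by
  obtain ⟨hopen, -, -, hconn, -⟩ := hΩ
  have hUo : IsOpen (iota i ⁻¹' Ω) := hopen.preimage (iota i).continuous
  have hUc : IsPreconnected (iota i ⁻¹' Ω) := by
    rw [← (iota_isometry hi).isEmbedding.isInducing.isPreconnected_image]
    have : iota i '' (iota i ⁻¹' Ω) = Ω ∩ slicePlane i := by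
      rw [Set.image_preimage_eq_inter_range]
      congr 1
      ext q
      constructor
      · rintro ⟨z, rfl⟩
        exact ⟨z.re, z.im, iota_apply i z⟩
      · rintro ⟨x, y, rfl⟩
        exact ⟨⟨x, y⟩, iota_apply i _⟩
    rw [this]
    exact (hconn i hi).isPreconnected
  refine Lfun_star i _ ?_
  generalize star (f (iota i z)) = w
  set h : ℂ → ℂ := fun z => Real.exp (qin v (iota i z)) • Lfun i w (f (iota i z)) with hh
  have hd : DifferentiableOn ℂ h (iota i ⁻¹' Ω) := by
    intro u hu
    apply DifferentiableAt.differentiableWithinAt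
    have hfd : HasFDerivAt f (fderiv ℝ f (iota i u)) (iota i u) :=
      ((hf.1.differentiableOn one_ne_zero).differentiableAt (hopen.mem_nhds hu)).hasFDerivAt
    have hi1 : HasFDerivAt (iota i) (iota i) u := (iota i).hasFDerivAt
    have h1 := (((qin v).hasFDerivAt (x := iota i u)).comp u hi1).exp
    have h2 := ((Lfun i w).hasFDerivAt (x := f (iota i u))).comp u (hfd.comp u hi1)
    have h3 := h1.smul h2
    have hcr := key_alg hi v _ _ _ (hf.2 i hi (iota i u) ⟨hu, u.re, u.im, iota_apply i u⟩)
    have hI : iota i Complex.I = i := by simp [iota_apply]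
    have hone : iota i 1 = 1 := by simp [iota_apply]
    rw [differentiableAt_complex_iff_differentiableAt_real]
    refine ⟨h3.differentiableAt, ?_⟩
    have hL := congrArg (Lfun i w) hcr
    rw [Lfun_mul hi] at hL
    simp only [map_add, map_smul] at hL
    have h4 : fderiv ℝ h u = _ := h3.fderiv
    rw [h4]
    simp [hI, hone] at hL ⊢
    linear_combination Complex.exp (qin v (iota i u) : ℂ) * hL
  have := (hd.analyticOnNhd hUo).eqOn_zero_of_preconnected_of_frequently_eq_zero hUc hz₀
    (hz.mono fun z hz => by simp [hh, hz]) hzΩ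
  simpa [hh] using this

lemma exists_slice {i₀ : ℍ[ℝ]} (hi₀ : i₀ ∈ Sph2) (q : ℍ[ℝ]) :
    ∃ j ∈ Sph2, ∃ z : ℂ, iota j z = q := by
  by_cases h : q.im = 0
  · refine ⟨i₀, hi₀, ⟨q.re, 0⟩, ?_⟩
    rw [iota_apply]
    have := Quaternion.re_add_im q
    rw [h] at this
    simpa using this
  · have hn : ‖q.im‖ ≠ 0 := norm_ne_zero_iff.2 h
    refine ⟨‖q.im‖⁻¹ • q.im, ⟨by simp, ?_⟩, ⟨q.re, ‖q.im‖⟩, ?_⟩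
    · rw [norm_smul, norm_inv, norm_norm, inv_mul_cancel₀ hn]
    · rw [iota_apply, smul_smul, mul_inv_cancel₀ hn, one_smul]
      exact Quaternion.re_add_im q

/-- Identity Principle for `v`-slice regular functions: if the zero set
of `f` restricted to some slice `Ω_i` has an accumulation point in `Ω_i`, then `f ≡ 0`. -/
theorem stmt12 (Ω : Set ℍ[ℝ]) (hΩ : AxSymSliceDomain Ω) (v : ℍ[ℝ])
    (f : ℍ[ℝ] → ℍ[ℝ]) (hf : VSliceRegularOn v f Ω)
    (i : ℍ[ℝ]) (hi : i ∈ Sph2) (p : ℍ[ℝ]) (hp : p ∈ Ω ∩ slicePlane i)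
    (hacc : AccPt p (Filter.principal ({q ∈ Ω | f q = 0} ∩ slicePlane i))) :
    ∀ q ∈ Ω, f q = 0 := by
  obtain ⟨hpΩ, x, y, hxy⟩ := hp
  have hp' : iota i ⟨x, y⟩ = p := by rw [iota_apply, hxy]
  have h1 : ∀ z : ℂ, iota i z ∈ Ω → f (iota i z) = 0 := by
    refine slice_id hΩ hf hi ⟨x, y⟩ (hp' ▸ hpΩ) ?_
    rw [accPt_iff_frequently, Metric.nhds_basis_ball.frequently_iff] at hacc
    rw [Filter.frequently_iff]
    intro U hU
    obtain ⟨ε, hε, hU⟩ := Metric.mem_nhdsWithin_iff.1 hU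
    obtain ⟨q, hq, hne, ⟨hqΩ, hq0⟩, a, b, hab⟩ := hacc ε hε
    have hq' : iota i ⟨a, b⟩ = q := by rw [iota_apply, hab]
    refine ⟨⟨a, b⟩, hU ⟨?_, ?_⟩, by rw [hq', hq0]⟩
    · rw [Metric.mem_ball, ← (iota_isometry hi).dist_eq, hp', hq']
      exact hq
    · intro heq
      apply hne
      rw [← hq', ← hp', Set.mem_singleton_iff.1 heq]
  obtain ⟨r, hr⟩ := hΩ.2.2.1
  have hreal : ∀ (j : ℍ[ℝ]) (t : ℝ), iota j (t : ℂ) = (t : ℍ[ℝ]) := by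
    intro j t
    simp [iota_apply]
  intro q hq
  obtain ⟨j, hj, z, rfl⟩ := exists_slice hi q
  refine slice_id hΩ hf hj (r : ℂ) (by rwa [hreal]) ?_ z hq
  have hev : ∀ᶠ t : ℝ in nhdsWithin r {r}ᶜ, f (iota j (t : ℂ)) = 0 := by
    apply Filter.Eventually.filter_mono nhdsWithin_le_nhds
    have := (Quaternion.continuous_coe.tendsto r).eventually (hΩ.1.mem_nhds hr)
    filter_upwards [this] with t ht
    rw [hreal, ← hreal i t]
    apply h1
    rwa [hreal]
  have htend : Filter.Tendsto (fun t : ℝ => (t : ℂ)) (nhdsWithin r {r}ᶜ)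
      (nhdsWithin (r : ℂ) {(r : ℂ)}ᶜ) := by
    apply Complex.continuous_ofReal.continuousWithinAt.tendsto_nhdsWithin
    intro t ht
    simpa using ht
  exact htend.frequently hev.frequently
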